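/- arXiv:2409.14948 — 3 statements merged into one kernel-verified Lean document; each statement's English description precedes it below -/
import Mathlib

section
/- A configuration c : ℤ^d → ℤ is sparse and periodic in direction v (for a nonzero v ∈ ℤ^d) if and only if c is a finite sum of periodic v-fibers. -/
namespace PaperFormal

/-- View an integer vector inside `ℝ^d`. -/
def intVecR {d : ℕ} (u : Fin d → ℤ) : Fin d → ℝ := fun i => (u i : ℝ)

/-- View an integer vector inside `ℚ^d`. -/
def intVecQ {d : ℕ} (u : Fin d → ℤ) : Fin d → ℚ := fun i => (u i : ℚ)

/-- A (Laurent) polynomial: a finitely supported integer-valued function on `ℤ^d`. -/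
def IsPoly {d : ℕ} (f : (Fin d → ℤ) → ℤ) : Prop := (Function.support f).Finite

/-- The product `(fc)(u) = ∑_v f(v) · c(u − v)` of a polynomial `f` with `c : ℤ^d → ℤ`. -/
noncomputable def polyApply {d : ℕ} (f : (Fin d → ℤ) → ℤ) (c : (Fin d → ℤ) → ℤ) :
    (Fin d → ℤ) → ℤ := fun u => ∑ᶠ v, f v * c (u - v)

/-- The product `(fc)(u) = ∑_v f(v) · c(u − v)` of a polynomial `f` with `c : ℤ^d → ℂ`. -/
noncomputable def polyApplyC {d : ℕ} (f : (Fin d → ℤ) → ℤ) (c : (Fin d → ℤ) → ℂ) :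
    (Fin d → ℤ) → ℂ := fun u => ∑ᶠ v, (f v : ℂ) * c (u - v)

/-- `c` is `v`-periodic: `c(u + v) = c(u)` for all `u`. -/
def Periodic {d : ℕ} (c : (Fin d → ℤ) → ℤ) (v : Fin d → ℤ) : Prop := ∀ u, c (u + v) = c u

/-- `c : ℤ^d → ℂ` is `v`-periodic. -/
def PeriodicC {d : ℕ} (c : (Fin d → ℤ) → ℂ) (v : Fin d → ℤ) : Prop := ∀ u, c (u + v) = c u

/-- `c` is `k`-periodic: it has `k` periods that are linearly independent over `ℚ`. -/
def KPeriodic {d : ℕ} (k : ℕ) (c : (Fin d → ℤ) → ℤ) : Prop :=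
  ∃ v : Fin k → (Fin d → ℤ),
    (LinearIndependent ℚ fun i => intVecQ (v i)) ∧ ∀ i, Periodic c (v i)

/-- `c` is strongly periodic: it is `d`-periodic. -/
def StronglyPeriodic {d : ℕ} (c : (Fin d → ℤ) → ℤ) : Prop := KPeriodic d c

/-- `c : ℤ^d → ℂ` is strongly periodic. -/
def StronglyPeriodicC {d : ℕ} (c : (Fin d → ℤ) → ℂ) : Prop :=
  ∃ v : Fin d → (Fin d → ℤ),
    (LinearIndependent ℚ fun i => intVecQ (v i)) ∧ ∀ i, PeriodicC c (v i)

/-- Two nonzero integer vectors are non-parallel if they are linearly independent over `ℚ`. -/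
def NonParallel {d : ℕ} (v w : Fin d → ℤ) : Prop :=
  LinearIndependent ℚ ![intVecQ v, intVecQ w]

/-- A line polynomial in direction `v`: a polynomial whose support contains at least two points
and is contained in `u + ℚv` for some `u ∈ ℤ^d`. -/
def IsLinePoly {d : ℕ} (f : (Fin d → ℤ) → ℤ) (v : Fin d → ℤ) : Prop :=
  IsPoly f ∧ v ≠ 0 ∧ 2 ≤ (Function.support f).ncard ∧
    ∃ u : Fin d → ℤ, ∀ w ∈ Function.support f, ∃ q : ℚ, intVecQ w = intVecQ u + q • intVecQ v

/-- The difference polynomial `X^v − 1`: value `1` at `v`, value `−1` at `0`, and `0` elsewhere. -/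
def diffPoly {d : ℕ} (v : Fin d → ℤ) : (Fin d → ℤ) → ℤ :=
  fun u => if u = v then 1 else if u = 0 then -1 else 0

/-- `c : ℤ^d → ℂ` is periodic in direction `v`: it is `kv`-periodic for some nonzero integer `k`. -/
def PeriodicInDirC {d : ℕ} (c : (Fin d → ℤ) → ℂ) (v : Fin d → ℤ) : Prop :=
  ∃ k : ℤ, k ≠ 0 ∧ PeriodicC c (k • v)

/-- `c : ℤ^d → ℂ` is `V`-periodic for a linear subspace `V ⊆ ℝ^d`: it is periodic in
direction `v` for every nonzero integer vector `v` lying in `V`. -/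
def VPeriodicC {d : ℕ} (V : Submodule ℝ (Fin d → ℝ)) (c : (Fin d → ℤ) → ℂ) : Prop :=
  ∀ v : Fin d → ℤ, v ≠ 0 → intVecR v ∈ V → PeriodicInDirC c v

/-- The discrete cube `C_m + t`. -/
def cube {d : ℕ} (m : ℕ) (t : Fin d → ℤ) : Set (Fin d → ℤ) :=
  {u | ∀ i, |u i - t i| ≤ (m : ℤ)}

/-- `c : ℤ^d → ℤ` is sparse: for some positive integer `a`,
`|supp(c) ∩ (C_m + t)| ≤ a·m` for all positive `m` and all `t`. -/
def Sparse {d : ℕ} (c : (Fin d → ℤ) → ℤ) : Prop :=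
  ∃ a : ℕ, 0 < a ∧ ∀ m : ℕ, 0 < m → ∀ t : Fin d → ℤ,
    (Function.support c ∩ cube m t).ncard ≤ a * m

/-- A `v`-fiber: a function whose support is contained in `w + ℚv` for some `w ∈ ℤ^d`. -/
def IsFiber {d : ℕ} (e : (Fin d → ℤ) → ℤ) (v : Fin d → ℤ) : Prop :=
  ∃ w : Fin d → ℤ, ∀ x ∈ Function.support e, ∃ q : ℚ, intVecQ x = intVecQ w + q • intVecQ v

/-- `c` is a sum of finitely many periodic `v`-fibers. -/
def FinSumPeriodicFibers {d : ℕ} (v : Fin d → ℤ) (c : (Fin d → ℤ) → ℤ) : Prop :=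
  ∃ (r : ℕ) (e : Fin r → ((Fin d → ℤ) → ℤ)), c = ∑ j, e j ∧
    ∀ j, IsFiber (e j) v ∧ ∃ w : Fin d → ℤ, w ≠ 0 ∧ Periodic (e j) w

end PaperFormal

namespace PaperFormal

/-- A linear map whose level sets are the lines in direction `v` (when `v i ≠ 0`). -/
def lineMap {d : ℕ} (v : Fin d → ℤ) (i : Fin d) (x : Fin d → ℤ) : Fin d → ℤ :=
  fun j => x j * v i - x i * v j

theorem lineMap_add_smul {d : ℕ} (v : Fin d → ℤ) (i : Fin d) (x : Fin d → ℤ) (k : ℤ) :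
    lineMap v i (x + k • v) = lineMap v i x := by
  funext j
  simp only [lineMap, Pi.add_apply, Pi.smul_apply, smul_eq_mul]
  ring

theorem lineMap_eq_of_line {d : ℕ} (v : Fin d → ℤ) (i : Fin d) (x w : Fin d → ℤ)
    (h : ∃ q : ℚ, intVecQ x = intVecQ w + q • intVecQ v) : lineMap v i x = lineMap v i w := by
  obtain ⟨q, hq⟩ := h
  funext j
  have hj := congrFun hq j
  have hi := congrFun hq i
  simp only [intVecQ, Pi.add_apply, Pi.smul_apply, smul_eq_mul] at hi hj
  simp only [lineMap]
  have : ((x j * v i - x i * v j : ℤ) : ℚ) = ((w j * v i - w i * v j : ℤ) : ℚ) := by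
    push_cast
    rw [hi, hj]
    ring
  exact_mod_cast this

theorem line_of_lineMap_eq {d : ℕ} (v : Fin d → ℤ) (i : Fin d) (hi : v i ≠ 0) (x w : Fin d → ℤ)
    (h : lineMap v i x = lineMap v i w) :
    ∃ q : ℚ, intVecQ x = intVecQ w + q • intVecQ v := by
  refine ⟨((x i : ℚ) - w i) / v i, ?_⟩
  funext j
  have hj := congrFun h j
  simp only [lineMap] at hj
  have hj' : (x j : ℚ) * v i - x i * v j = w j * v i - w i * v j := by exact_mod_cast hj
  have hi' : (v i : ℚ) ≠ 0 := by exact_mod_cast hi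
  simp only [intVecQ, Pi.add_apply, Pi.smul_apply, smul_eq_mul]
  field_simp
  linarith

theorem lineMap_inj {d : ℕ} (v : Fin d → ℤ) (i : Fin d) (hi : v i ≠ 0) (x w : Fin d → ℤ)
    (h : lineMap v i x = lineMap v i w) (hx : x i = w i) : x = w := by
  funext j
  have hj := congrFun h j
  simp only [lineMap, hx] at hj
  exact mul_right_cancel₀ hi (by linarith)

theorem periodic_zsmul {d : ℕ} {c : (Fin d → ℤ) → ℤ} {w : Fin d → ℤ} (h : Periodic c w) (n : ℤ) :
    Periodic c (n • w) := by
  have h' : Function.Periodic c w := h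
  exact h'.zsmul n

theorem cube_finite {d : ℕ} (m : ℕ) (t : Fin d → ℤ) : (cube m t).Finite := by
  apply (Set.finite_Icc (fun i => t i - m) (fun i => t i + m)).subset
  intro x hx
  constructor <;> intro i <;> have := abs_le.1 (hx i) <;> simp only <;> linarith

/-- A sparse function with period `k • v` has support on finitely many lines. -/
theorem card_lines_le {d : ℕ} (c : (Fin d → ℤ) → ℤ) (v : Fin d → ℤ) (i : Fin d) (hi : v i ≠ 0)
    (a : ℕ) (ha : ∀ m : ℕ, 0 < m → ∀ t : Fin d → ℤ,
      (Function.support c ∩ cube m t).ncard ≤ a * m)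
    (k : ℤ) (hk : k ≠ 0) (hp : Periodic c (k • v)) (M : ℕ) (hM : ∀ j, |k * v j| ≤ M)
    (S : Finset (Fin d → ℤ)) (hS : ∀ x ∈ S, c x ≠ 0)
    (hinj : Set.InjOn (lineMap v i) (S : Set (Fin d → ℤ))) : S.card ≤ a * M := by
  by_contra hlt
  push Not at hlt
  obtain ⟨B, hB⟩ : ∃ B : ℕ, ∀ x ∈ S, ∀ j, |x j| ≤ (B : ℤ) := by
    refine ⟨∑ x ∈ S, ∑ j, (x j).natAbs, fun x hx j => ?_⟩
    have h1 : (x j).natAbs ≤ ∑ j, (x j).natAbs :=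
      Finset.single_le_sum (f := fun j => (x j).natAbs) (fun _ _ => Nat.zero_le _)
        (Finset.mem_univ j)
    have h2 : ∑ j, (x j).natAbs ≤ ∑ x ∈ S, ∑ j, (x j).natAbs :=
      Finset.single_le_sum (f := fun x : Fin d → ℤ => ∑ j, (x j).natAbs)
        (fun _ _ => Nat.zero_le _) hx
    rw [Int.abs_eq_natAbs]
    exact_mod_cast h1.trans h2
  have hM1 : 0 < M := by
    have h1 := hM i
    have h2 : 0 < |k * v i| := abs_pos.2 (mul_ne_zero hk hi)
    exact_mod_cast h2.trans_le h1
  set n := a * B + 1 with hn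
  have hm : 0 < B + n * M := by positivity
  have key := ha (B + n * M) hm 0
  let f : (Fin d → ℤ) × ℕ → (Fin d → ℤ) := fun p => p.1 + (p.2 : ℤ) • (k • v)
  have hf : Set.InjOn f ((S ×ˢ Finset.range (n + 1) : Finset _) : Set ((Fin d → ℤ) × ℕ)) := by
    rintro ⟨x, l⟩ hx ⟨y, l'⟩ hy hxy
    simp only [Finset.coe_product, Set.mem_prod, Finset.mem_coe] at hx hy
    simp only [f, smul_smul] at hxy
    have h1 := congrArg (lineMap v i) hxy
    rw [lineMap_add_smul, lineMap_add_smul] at h1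
    have h2 : x = y := hinj hx.1 hy.1 h1
    subst h2
    have h3 := congrFun hxy i
    simp only [Pi.add_apply, Pi.smul_apply, smul_eq_mul, add_right_inj] at h3
    have h4 := mul_right_cancel₀ hk (mul_right_cancel₀ hi h3)
    have h5 : l = l' := by exact_mod_cast h4
    rw [h5]
  have hsub : ((Finset.image f (S ×ˢ Finset.range (n + 1)) : Finset _) : Set (Fin d → ℤ)) ⊆
      Function.support c ∩ cube (B + n * M) 0 := by
    intro y hy
    simp only [Finset.mem_coe, Finset.mem_image, Finset.mem_product, Finset.mem_range] at hy
    obtain ⟨⟨x, l⟩, ⟨hx, hl⟩, rfl⟩ := hy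
    refine ⟨?_, ?_⟩
    · simp only [Function.mem_support, f]
      rw [periodic_zsmul hp (l : ℤ) x]
      exact hS x hx
    · intro j
      simp only [f, Pi.add_apply, Pi.smul_apply, smul_eq_mul, Pi.zero_apply, sub_zero]
      refine (abs_add_le _ _).trans ?_
      push_cast
      refine add_le_add (hB x hx j) ?_
      rw [abs_mul]
      have h1 : |(l : ℤ)| ≤ n := by
        rw [Nat.abs_cast]
        exact_mod_cast Nat.lt_succ_iff.1 hl
      exact mul_le_mul h1 (hM j) (abs_nonneg _) (Int.natCast_nonneg _)
  have hcard := Set.ncard_le_ncard hsub ((cube_finite _ _).subset Set.inter_subset_right)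
  rw [Set.ncard_coe_finset, Finset.card_image_of_injOn hf, Finset.card_product,
    Finset.card_range] at hcard
  have h1 : (a * M + 1) * (n + 1) ≤ a * (B + n * M) :=
    (Nat.mul_le_mul_right _ hlt).trans (hcard.trans key)
  have h2 : (a * M + 1) * (n + 1) = a * M * n + a * M + n + 1 := by ring
  have h3 : a * (B + n * M) = a * B + a * M * n := by ring
  rw [h2, h3] at h1
  have h4 := Nat.zero_le (a * M)
  omega

theorem lines_finite {d : ℕ} (c : (Fin d → ℤ) → ℤ) (v : Fin d → ℤ) (i : Fin d) (hi : v i ≠ 0)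
    (hs : Sparse c) (k : ℤ) (hk : k ≠ 0) (hp : Periodic c (k • v)) :
    (Set.image (lineMap v i) (Function.support c)).Finite := by
  obtain ⟨a, -, ha⟩ := hs
  by_contra hinf
  have hinf : (Set.image (lineMap v i) (Function.support c)).Infinite := hinf
  let M : ℕ := ∑ j, (k * v j).natAbs
  have hM : ∀ j, |k * v j| ≤ (M : ℤ) := by
    intro j
    rw [Int.abs_eq_natAbs]
    exact_mod_cast Finset.single_le_sum (f := fun j => (k * v j).natAbs)
      (fun _ _ => Nat.zero_le _) (Finset.mem_univ j)
  obtain ⟨T, hT, hTc⟩ := hinf.exists_subset_card_eq (a * M + 1)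
  obtain ⟨S, hS, hinj, hST⟩ : ∃ S : Finset (Fin d → ℤ), (∀ x ∈ S, c x ≠ 0) ∧
      Set.InjOn (lineMap v i) (S : Set (Fin d → ℤ)) ∧ S.card = T.card := by
    choose! g hg using hT
    have hgi : Set.InjOn g (T : Set (Fin d → ℤ)) := by
      intro x hx y hy hxy
      rw [← (hg hx).2, ← (hg hy).2, hxy]
    refine ⟨T.image g, ?_, ?_, Finset.card_image_of_injOn hgi⟩
    · intro x hx
      obtain ⟨y, hy, rfl⟩ := Finset.mem_image.1 hx
      exact (hg hy).1
    · intro x hx y hy hxy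
      obtain ⟨x', hx', rfl⟩ := Finset.mem_image.1 hx
      obtain ⟨y', hy', rfl⟩ := Finset.mem_image.1 hy
      rw [(hg hx').2, (hg hy').2] at hxy
      rw [hxy]
  have := card_lines_le c v i hi a ha k hk hp M hM S hS hinj
  omega

open Classical in
theorem finSum_of_sparse {d : ℕ} (c : (Fin d → ℤ) → ℤ) (v : Fin d → ℤ) (hv : v ≠ 0)
    (hs : Sparse c) (k : ℤ) (hk : k ≠ 0) (hp : Periodic c (k • v)) :
    FinSumPeriodicFibers v c := by
  obtain ⟨i, hi⟩ := Function.ne_iff.1 hv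
  have hfin := lines_finite c v i hi hs k hk hp
  set T := hfin.toFinset with hT
  refine ⟨T.card, fun r x => if lineMap v i x = (T.equivFin.symm r : Fin d → ℤ) then c x else 0,
    ?_, ?_⟩
  · funext x
    rw [Finset.sum_apply]
    rw [Equiv.sum_comp T.equivFin.symm
      (fun p : T => if lineMap v i x = (p : Fin d → ℤ) then c x else 0)]
    by_cases hx : c x = 0
    · simp [hx]
    · have hmem : lineMap v i x ∈ T := by
        rw [hT, Set.Finite.mem_toFinset]
        exact ⟨x, hx, rfl⟩
      rw [Finset.sum_coe_sort T (fun p => if lineMap v i x = p then c x else 0),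
        Finset.sum_ite_eq, if_pos hmem]
  · intro r
    refine ⟨?_, k • v, smul_ne_zero hk hv, ?_⟩
    · have hmem := (T.equivFin.symm r).2
      obtain ⟨w, -, hw⟩ := hfin.mem_toFinset.1 hmem
      refine ⟨w, fun x hx => line_of_lineMap_eq v i hi x w ?_⟩
      rw [Function.mem_support] at hx
      rw [hw]
      by_contra hne
      exact hx (if_neg hne)
    · intro u
      simp only [lineMap_add_smul, hp u]

theorem fiber_periodic {d : ℕ} (e : (Fin d → ℤ) → ℤ) (v : Fin d → ℤ) (hv : v ≠ 0)
    (he : IsFiber e v) (w : Fin d → ℤ) (hw : w ≠ 0) (hp : Periodic e w) :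
    ∃ k : ℤ, k ≠ 0 ∧ Periodic e (k • v) := by
  obtain ⟨i, hi⟩ := Function.ne_iff.1 hv
  by_cases h0 : ∃ x, e x ≠ 0
  · obtain ⟨x, hx⟩ := h0
    obtain ⟨z, hz⟩ := he
    have h1 := lineMap_eq_of_line v i x z (hz x hx)
    have h2 := lineMap_eq_of_line v i (x + w) z (hz (x + w) (by
      rw [Function.mem_support, hp x]
      exact hx))
    have h3 : ∀ j, w j * v i = w i * v j := by
      intro j
      have h4 := congrFun (h2.trans h1.symm) j
      simp only [lineMap, Pi.add_apply] at h4
      linarith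
    refine ⟨w i, ?_, ?_⟩
    · intro h
      apply hw
      funext j
      have := h3 j
      rw [h, zero_mul] at this
      exact (mul_eq_zero.1 this).resolve_right hi
    · have : w i • v = v i • w := by
        funext j
        simp only [Pi.smul_apply, smul_eq_mul]
        rw [← h3 j, mul_comm]
      rw [this]
      exact periodic_zsmul hp _
  · push Not at h0
    exact ⟨1, one_ne_zero, fun u => by rw [h0, h0]⟩

theorem sparse_of_lines {d : ℕ} (c : (Fin d → ℤ) → ℤ) (v : Fin d → ℤ) (i : Fin d) (hi : v i ≠ 0)
    (T : Finset (Fin d → ℤ)) (hT : ∀ x, c x ≠ 0 → lineMap v i x ∈ T) : Sparse c := by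
  refine ⟨3 * T.card + 1, Nat.succ_pos _, fun m hm t => ?_⟩
  have h1 : (Function.support c ∩ cube m t).ncard ≤
      ((T ×ˢ Finset.Icc (t i - m) (t i + m) : Finset _) : Set ((Fin d → ℤ) × ℤ)).ncard := by
    refine Set.ncard_le_ncard_of_injOn (fun x => (lineMap v i x, x i)) ?_ ?_
      (Finset.finite_toSet _)
    · intro x hx
      have := abs_le.1 (hx.2 i)
      simp only [Finset.mem_coe, Finset.mem_product, Finset.mem_Icc]
      exact ⟨hT x hx.1, by linarith, by linarith⟩
    · intro x _ y _ hxy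
      simp only [Prod.mk.injEq] at hxy
      exact lineMap_inj v i hi x y hxy.1 hxy.2
  rw [Set.ncard_coe_finset, Finset.card_product, Int.card_Icc] at h1
  have h2 : (t i + m + 1 - (t i - m)).toNat = 2 * m + 1 := by omega
  rw [h2] at h1
  refine h1.trans ?_
  nlinarith [Nat.zero_le T.card, Nat.mul_le_mul_left T.card hm]

theorem sparse_of_finSum {d : ℕ} (c : (Fin d → ℤ) → ℤ) (v : Fin d → ℤ) (hv : v ≠ 0)
    (h : FinSumPeriodicFibers v c) : Sparse c ∧ ∃ k : ℤ, k ≠ 0 ∧ Periodic c (k • v) := by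
  obtain ⟨i, hi⟩ := Function.ne_iff.1 hv
  obtain ⟨r, e, rfl, he⟩ := h
  constructor
  · choose z hz using fun j => (he j).1
    refine sparse_of_lines _ v i hi (Finset.univ.image fun j => lineMap v i (z j)) ?_
    intro x hx
    rw [Finset.sum_apply] at hx
    obtain ⟨j, -, hj⟩ := Finset.exists_ne_zero_of_sum_ne_zero hx
    rw [Finset.mem_image]
    exact ⟨j, Finset.mem_univ j, (lineMap_eq_of_line v i x (z j) (hz j x hj)).symm⟩
  · have hk : ∀ j, ∃ k : ℤ, k ≠ 0 ∧ Periodic (e j) (k • v) := by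
      intro j
      obtain ⟨hf, w, hw, hp⟩ := he j
      exact fiber_periodic (e j) v hv hf w hw hp
    choose k hk0 hkp using hk
    refine ⟨∏ j, k j, Finset.prod_ne_zero_iff.2 fun j _ => hk0 j, fun u => ?_⟩
    rw [Finset.sum_apply, Finset.sum_apply]
    refine Finset.sum_congr rfl fun j _ => ?_
    obtain ⟨n, hn⟩ := Finset.dvd_prod_of_mem k (Finset.mem_univ j)
    rw [hn, mul_comm, mul_smul]
    exact periodic_zsmul (hkp j) n u

/-- A configuration is sparse and periodic in direction `v` if and only if
it is a finite sum of periodic `v`-fibers. -/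
theorem sparse_and_periodic_iff_finite_sum_of_fibers
    {d : ℕ} (c : (Fin d → ℤ) → ℤ) (hconf : (Set.range c).Finite)
    (v : Fin d → ℤ) (hv : v ≠ 0) :
    (Sparse c ∧ ∃ k : ℤ, k ≠ 0 ∧ Periodic c (k • v)) ↔ FinSumPeriodicFibers v c := by
  constructor
  · rintro ⟨hs, k, hk, hp⟩
    exact finSum_of_sparse c v hv hs k hk hp
  · exact sparse_of_finSum c v hv

end PaperFormal
end

section
/- Let c : ℤ^d → ℤ be a sparse configuration annihilated by the product φψ of two line polynomials φ and ψ in non-parallel directions v and u respectively. Then c = c_1 + c_2 where c_1 is a finite sum of periodic v-fibers with φc_1 = 0, and c_2 is a finite sum of periodic u-fibers with ψc_2 = 0. -/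
namespace PaperFormal

theorem rec1D {ι : Type*} (S : Finset ι) (κ : ι → ℤ) (hκ : Set.InjOn κ S) (α : ι → ℤ)
    (hα : ∀ i ∈ S, α i ≠ 0) (hS : 2 ≤ S.card) (V : Set ℤ) (hV : V.Finite) :
    ∃ P : ℕ, 0 < P ∧ ∀ f : ℤ → ℤ, (∀ t, f t ∈ V) →
      (∀ t, ∑ i ∈ S, α i * f (t - κ i) = 0) → ∀ t, f (t + P) = f t := by
  classical
  have hne : S.Nonempty := Finset.card_pos.mp (by omega)
  obtain ⟨a, haS, ha⟩ := S.exists_min_image κ hne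
  obtain ⟨b, hbS, hb⟩ := S.exists_max_image κ hne
  have hab : κ a < κ b := by
    rcases lt_or_eq_of_le (hb a haS) with h | h
    · exact h
    · exfalso
      obtain ⟨x, hx, y, hy, hxy⟩ := Finset.one_lt_card.mp (show 1 < S.card by omega)
      apply hxy
      apply hκ hx hy
      have := ha x hx; have := ha y hy; have := hb x hx; have := hb y hy
      omega
  obtain ⟨n, hn⟩ := Int.eq_ofNat_of_zero_le (show 0 ≤ κ b - κ a by omega)
  have hVt : Finite V := hV
  have : Fintype V := Fintype.ofFinite _
  set N := Fintype.card (Fin n → V) with hN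
  refine ⟨N.factorial, Nat.factorial_pos _, ?_⟩
  intro f hf hrec
  -- determinism
  have key : ∀ i0 ∈ S, ∀ x y : ℤ, (∀ i ∈ S, i ≠ i0 → f (x - κ i) = f (y - κ i)) →
      f (x - κ i0) = f (y - κ i0) := by
    intro i0 hi0 x y h
    have h1 := hrec x
    have h2 := hrec y
    rw [← Finset.add_sum_erase _ _ hi0] at h1 h2
    have h3 : ∑ i ∈ S.erase i0, α i * f (x - κ i) = ∑ i ∈ S.erase i0, α i * f (y - κ i) := by
      apply Finset.sum_congr rfl
      intro i hi
      rw [h i (Finset.mem_of_mem_erase hi) (Finset.ne_of_mem_erase hi)]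
    rw [h3] at h1
    exact mul_left_cancel₀ (hα i0 hi0) (by linarith)
  let R : ℤ → ℤ → Prop := fun x y => ∀ j : ℤ, 0 ≤ j → j < n → f (x + j) = f (y + j)
  have fwd : ∀ x y, R x y → R (x+1) (y+1) := by
    intro x y h j hj0 hjn
    by_cases hj : j + 1 < n
    · have := h (j+1) (by omega) hj
      rwa [show x + 1 + j = x + (j+1) by ring, show y + 1 + j = y + (j+1) by ring]
    · have := key a haS (x + κ b) (y + κ b) (by
        intro i hi hia
        have h1 := ha i hi
        have h2 := hb i hi
        have h3 : κ i ≠ κ a := fun h => hia (hκ hi haS h)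
        have := h (κ b - κ i) (by omega) (by omega)
        rwa [show x + κ b - κ i = x + (κ b - κ i) by ring,
          show y + κ b - κ i = y + (κ b - κ i) by ring])
      rwa [show x + κ b - κ a = x + 1 + j by omega, show y + κ b - κ a = y + 1 + j by omega] at this
  have bwd : ∀ x y, R x y → R (x-1) (y-1) := by
    intro x y h j hj0 hjn
    by_cases hj : 1 ≤ j
    · have := h (j-1) (by omega) (by omega)
      rwa [show x - 1 + j = x + (j-1) by ring, show y - 1 + j = y + (j-1) by ring]
    · have := key b hbS (x - 1 + κ b) (y - 1 + κ b) (by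
        intro i hi hia
        have h1 := ha i hi
        have h2 := hb i hi
        have h3 : κ i ≠ κ b := fun h => hia (hκ hi hbS h)
        have := h (κ b - κ i - 1) (by omega) (by omega)
        rwa [show x - 1 + κ b - κ i = x + (κ b - κ i - 1) by ring,
          show y - 1 + κ b - κ i = y + (κ b - κ i - 1) by ring])
      rwa [show x - 1 + κ b - κ b = x - 1 + j by omega,
        show y - 1 + κ b - κ b = y - 1 + j by omega] at this
  have all : ∀ x y, R x y → ∀ t : ℤ, R (x + t) (y + t) := by
    intro x y h t
    induction t using Int.induction_on with
    | zero => simpa using h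
    | succ k ih => simpa [add_assoc] using fwd _ _ ih
    | pred k ih => simpa [add_sub_assoc] using bwd _ _ ih
  -- pigeonhole
  let σ : Fin (N+1) → (Fin n → V) := fun i j => ⟨f ((i : ℕ) + (j : ℕ) : ℤ), hf _⟩
  obtain ⟨i, i', hii, hσ⟩ := Fintype.exists_ne_map_eq_of_card_lt σ (by simp [hN])
  have main : ∀ i i' : Fin (N+1), i < i' → σ i = σ i' → ∀ t, f (t + N.factorial) = f t := by
    intro i i' hlt h
    have hR : R (i : ℕ) (i' : ℕ) := by
      intro j hj0 hjn
      obtain ⟨j, rfl⟩ := Int.eq_ofNat_of_zero_le hj0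
      have := congrFun h ⟨j, by exact_mod_cast hjn⟩
      simpa [σ] using this
    have hlt' : (i : ℕ) < (i' : ℕ) := hlt
    have hp : ∀ t, f (t + ((i' : ℕ) - (i : ℕ) : ℤ)) = f t := by
      intro t
      have := all _ _ hR (t - (i : ℕ)) 0 le_rfl (by omega)
      simp only [add_zero] at this
      rw [show ((i:ℕ):ℤ) + (t - (i:ℕ)) = t by ring] at this
      rw [this]; congr 1; ring
    have hdvd : ((i' : ℕ) - (i : ℕ)) ∣ N.factorial :=
      Nat.dvd_factorial (by omega) (by have := i'.2; omega)
    obtain ⟨q, hq⟩ := hdvd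
    have hper : Function.Periodic f ((i' : ℕ) - (i : ℕ) : ℤ) := hp
    intro t
    have := hper.nat_mul q t
    rw [← this, hq]
    congr 2
    push_cast [Nat.cast_sub hlt'.le]
    ring
  rcases lt_or_gt_of_ne hii with h | h
  · exact main _ _ h hσ
  · exact main _ _ h hσ.symm

/-- integer points on the rational line -/
def lineSub {d : ℕ} (v : Fin d → ℤ) : AddSubgroup (Fin d → ℤ) where
  carrier := {x | ∃ q : ℚ, intVecQ x = q • intVecQ v}
  zero_mem' := ⟨0, by ext i; simp [intVecQ]⟩
  add_mem' := by
    rintro x y ⟨q, hq⟩ ⟨r, hr⟩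
    refine ⟨q + r, ?_⟩
    rw [add_smul, ← hq, ← hr]; ext i; simp [intVecQ]
  neg_mem' := by
    rintro x ⟨q, hq⟩
    refine ⟨-q, ?_⟩
    rw [neg_smul, ← hq]; ext i; simp [intVecQ]

theorem mem_lineSub {d : ℕ} {v x : Fin d → ℤ} :
    x ∈ lineSub v ↔ ∃ q : ℚ, intVecQ x = q • intVecQ v := Iff.rfl

theorem sub_mem_lineSub {d : ℕ} {v x y : Fin d → ℤ} :
    x - y ∈ lineSub v ↔ ∃ q : ℚ, intVecQ x = intVecQ y + q • intVecQ v := by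
  rw [mem_lineSub]
  have : intVecQ (x - y) = intVecQ x - intVecQ y := by ext i; simp [intVecQ]
  rw [this]
  simp only [sub_eq_iff_eq_add']

theorem self_mem_lineSub {d : ℕ} (v : Fin d → ℤ) : v ∈ lineSub v := ⟨1, by simp⟩

theorem exists_prim {d : ℕ} (v : Fin d → ℤ) (hv : v ≠ 0) :
    ∃ (v0 : Fin d → ℤ) (g : ℤ), v = g • v0 ∧ ∀ x ∈ lineSub v, ∃ n : ℤ, x = n • v0 := by
  set g := Finset.univ.gcd v with hg
  have hgd : ∀ i, g ∣ v i := fun i => Finset.gcd_dvd (Finset.mem_univ i)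
  have hg0 : g ≠ 0 := by
    intro h
    apply hv
    ext i
    have := hgd i
    rw [h] at this
    simpa using this
  choose v0 hv0 using hgd
  refine ⟨v0, g, by ext i; simp [hv0 i], ?_⟩
  rintro x ⟨q, hq⟩
  have hx : ∀ i, (x i : ℚ) = q * v i := fun i => by simpa [intVecQ] using congrFun hq i
  have hx' : ∀ i, x i * q.den = q.num * v i := by
    intro i
    have := hx i
    have h2 : (q.den : ℚ) ≠ 0 := by exact_mod_cast q.den_nz
    have h3 : q * q.den = q.num := Rat.mul_den_eq_num q
    have : (x i : ℚ) * q.den = q.num * v i := by rw [this, ← h3]; ring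
    exact_mod_cast this
  have hdv : (q.den : ℤ) ∣ g := by
    apply Finset.dvd_gcd
    intro i _
    have h1 : (q.den : ℤ) ∣ q.num * v i := ⟨x i, by rw [← hx' i]; ring⟩
    have hc : IsCoprime (q.den : ℤ) q.num := by
      rw [Int.isCoprime_iff_gcd_eq_one, Int.gcd_comm]
      exact q.reduced
    exact hc.dvd_of_dvd_mul_left h1
  obtain ⟨k, hk⟩ := hdv
  refine ⟨q.num * k, ?_⟩
  ext i
  have h2 : (q.den : ℤ) ≠ 0 := by exact_mod_cast q.den_nz
  apply mul_right_cancel₀ h2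
  rw [hx' i, hv0 i, hk]
  simp only [Pi.smul_apply, smul_eq_mul]
  ring

theorem polyApply_eq {d : ℕ} {f : (Fin d → ℤ) → ℤ} (hf : IsPoly f) (c : (Fin d → ℤ) → ℤ)
    (x : Fin d → ℤ) : polyApply f c x = ∑ w ∈ hf.toFinset, f w * c (x - w) := by
  unfold polyApply
  apply finsum_eq_sum_of_support_subset
  intro w hw
  exact (Set.Finite.mem_toFinset (s := Function.support f) hf).mpr (left_ne_zero_of_mul hw)

theorem periodic_of_ann {d : ℕ} {φ : (Fin d → ℤ) → ℤ} {v : Fin d → ℤ} (hφ : IsLinePoly φ v)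
    (e : (Fin d → ℤ) → ℤ) (he : (Set.range e).Finite) (hann : polyApply φ e = 0) :
    ∃ P : ℕ, 0 < P ∧ Periodic e ((P : ℤ) • v) := by
  obtain ⟨hp, hv, hcard, b, hb⟩ := hφ
  have hmem : ∀ {w}, w ∈ Set.Finite.toFinset hp → w ∈ Function.support φ :=
    fun h => (Set.Finite.mem_toFinset (s := Function.support φ) hp).mp h
  have hmem : ∀ {w}, w ∈ Set.Finite.toFinset hp → w ∈ Function.support φ :=
    fun h => (Set.Finite.mem_toFinset (s := Function.support φ) hp).mp h
  obtain ⟨v0, g, hg, hprim⟩ := exists_prim v hv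
  have h1 : ∀ w, ∃ n : ℤ, w ∈ Function.support φ → w = b + n • v0 := by
    intro w
    by_cases hw : w ∈ Function.support φ
    · obtain ⟨n, hn⟩ := hprim (w - b) (sub_mem_lineSub.mpr (hb w hw))
      exact ⟨n, fun _ => by rw [← hn]; abel⟩
    · exact ⟨0, fun h => absurd h hw⟩
  choose κ hκ using h1
  obtain ⟨P, hP, hper⟩ := rec1D hp.toFinset κ (by
    intro x hx y hy hxy
    rw [hκ x (hmem hx), hκ y (hmem hy), hxy]) φ
    (fun i hi => hmem hi)
    (by rwa [← Set.ncard_eq_toFinset_card _ hp]) _ he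
  refine ⟨P, hP, ?_⟩
  have hv0 : Function.Periodic e ((P : ℤ) • v0) := by
    intro x
    have := hper (fun t => e (x + t • v0)) (fun t => ⟨_, rfl⟩) (by
      intro t
      have := congrFun hann (x + b + t • v0)
      rw [polyApply_eq hp] at this
      rw [Pi.zero_apply] at this
      rw [← this]
      apply Finset.sum_congr rfl
      intro w hw
      have := hκ w (hmem hw)
      congr 2
      conv_rhs => rw [this]
      module) 0
    simpa using this
  have := hv0.zsmul g
  intro x
  rw [← this x, hg]
  congr 1
  module

end PaperFormal

namespace PaperFormal

/-- finite range and sparse -/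
def Good {d : ℕ} (c : (Fin d → ℤ) → ℤ) : Prop := (Set.range c).Finite ∧ Sparse c

theorem Good.add {d : ℕ} {c e : (Fin d → ℤ) → ℤ} (hc : Good c) (he : Good e) : Good (c + e) := by
  obtain ⟨hc1, a, ha, hc2⟩ := hc
  obtain ⟨he1, b, hb, he2⟩ := he
  refine ⟨(hc1.image2 (· + ·) he1).subset ?_, a + b, by omega, ?_⟩
  · rintro _ ⟨x, rfl⟩
    exact ⟨c x, ⟨x, rfl⟩, e x, ⟨x, rfl⟩, rfl⟩
  · intro m hm t
    have hsub : Function.support (c + e) ∩ cube m t ⊆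
        (Function.support c ∩ cube m t) ∪ (Function.support e ∩ cube m t) := by
      rintro x ⟨hx, hx'⟩
      rcases Function.support_add c e hx with h | h
      · exact Or.inl ⟨h, hx'⟩
      · exact Or.inr ⟨h, hx'⟩
    have hfin := (cube_finite m t)
    calc _ ≤ _ := Set.ncard_le_ncard hsub
            ((hfin.subset Set.inter_subset_right).union (hfin.subset Set.inter_subset_right))
      _ ≤ _ := Set.ncard_union_le _ _
      _ ≤ a * m + b * m := add_le_add (hc2 m hm t) (he2 m hm t)
      _ = (a + b) * m := by ring

theorem Good.zero {d : ℕ} : Good (0 : (Fin d → ℤ) → ℤ) := by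
  refine ⟨(Set.finite_singleton (0 : ℤ)).subset ?_, 1, one_pos, ?_⟩
  · rintro _ ⟨x, rfl⟩; rfl
  · intro m hm t; simp

theorem Good.smul_shift {d : ℕ} {c : (Fin d → ℤ) → ℤ} (hc : Good c) (k : ℤ) (w : Fin d → ℤ) :
    Good (fun x => k * c (x - w)) := by
  obtain ⟨hc1, a, ha, hc2⟩ := hc
  refine ⟨(hc1.image (fun y => k * y)).subset ?_, a, ha, ?_⟩
  · rintro _ ⟨x, rfl⟩
    exact ⟨_, ⟨x - w, rfl⟩, rfl⟩
  · intro m hm t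
    refine le_trans ?_ (hc2 m hm (t - w))
    refine Set.ncard_le_ncard_of_injOn (fun x => x - w) ?_ ?_
      ((cube_finite m (t - w)).subset Set.inter_subset_right)
    · rintro x ⟨hx, hx'⟩
      refine ⟨right_ne_zero_of_mul hx, fun i => ?_⟩
      have := hx' i
      simpa using this
    · intro x _ y _ h
      simpa using h

theorem Good.poly {d : ℕ} {c : (Fin d → ℤ) → ℤ} (hc : Good c) {f : (Fin d → ℤ) → ℤ}
    (hf : IsPoly f) : Good (polyApply f c) := by
  classical
  have : polyApply f c = ∑ w ∈ hf.toFinset, fun x => f w * c (x - w) := by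
    ext x; rw [polyApply_eq hf, Finset.sum_apply]
  rw [this]
  generalize hf.toFinset = S
  induction S using Finset.induction_on with
  | empty => simpa using Good.zero
  | insert w S hw ih =>
    rw [Finset.sum_insert hw]
    exact (hc.smul_shift _ _).add ih

theorem finite_lines {d : ℕ} {v : Fin d → ℤ} (hv : v ≠ 0) {e : (Fin d → ℤ) → ℤ}
    (he : Sparse e) {P : ℕ} (hP : 0 < P) (hper : Periodic e ((P : ℤ) • v)) :
    ((fun x : Fin d → ℤ => (x : (Fin d → ℤ) ⧸ lineSub v)) '' Function.support e).Finite := by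
  classical
  obtain ⟨a, ha, hs⟩ := he
  by_contra hinf
  set p := (P : ℤ) • v with hp
  have hp0 : p ≠ 0 := smul_ne_zero (by exact_mod_cast hP.ne') hv
  have hpm : p ∈ lineSub v := (lineSub v).zsmul_mem (self_mem_lineSub v) _
  -- bounds
  have bound : ∀ T : Finset (Fin d → ℤ), ∃ R : ℕ, 0 < R ∧ ∀ x ∈ T, ∀ i, |x i| ≤ (R : ℤ) := by
    intro T
    refine ⟨∑ x ∈ T, ∑ i, (x i).natAbs + 1, by omega, ?_⟩
    intro x hx i
    have h1 : (x i).natAbs ≤ ∑ i, (x i).natAbs :=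
      Finset.single_le_sum (f := fun i => (x i).natAbs) (fun _ _ => Nat.zero_le _) (Finset.mem_univ i)
    have h2 : ∑ i, (x i).natAbs ≤ ∑ x ∈ T, ∑ i, (x i).natAbs :=
      Finset.single_le_sum (f := fun x : Fin d → ℤ => ∑ i, (x i).natAbs)
        (fun _ _ => Nat.zero_le _) hx
    rw [Int.abs_eq_natAbs]
    omega
  obtain ⟨L, hL, hLb⟩ := bound {p}
  have hLb := hLb p (by simp)
  obtain ⟨A, hA, hAc⟩ := Set.Infinite.exists_subset_card_eq hinf (a * (1 + L) + 1)
  have hrep : ∀ z : (Fin d → ℤ) ⧸ lineSub v, ∃ x : Fin d → ℤ, z ∈ A → e x ≠ 0 ∧ (x : (Fin d → ℤ) ⧸ lineSub v) = z := by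
    intro z
    by_cases hz : z ∈ A
    · obtain ⟨x, hx, hxz⟩ := hA hz
      exact ⟨x, fun _ => ⟨hx, hxz⟩⟩
    · exact ⟨0, fun h => absurd h hz⟩
  choose r hr using hrep
  obtain ⟨R, hR, hRb⟩ := bound (A.image r)
  have hperN : ∀ (k : ℕ) x, e (x + k • p) = e x := fun k x => (Function.Periodic.nsmul (f := e) hper k) x
  have hbig := hs (R + R * L) (by positivity) 0
  have hle : ((A ×ˢ Finset.range (R+1) : Finset _) : Set (((Fin d → ℤ) ⧸ lineSub v) × ℕ)).ncard ≤
      (Function.support e ∩ cube (R + R * L) 0).ncard := by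
    refine Set.ncard_le_ncard_of_injOn (fun z => r z.1 + z.2 • p) ?_ ?_
      ((cube_finite _ _).subset Set.inter_subset_right)
    · rintro ⟨z, k⟩ hz
      simp only [Finset.coe_product, Set.mem_prod, Finset.mem_coe, Finset.mem_range] at hz
      refine ⟨?_, fun i => ?_⟩
      · simp only [Function.mem_support, hperN]
        exact (hr z hz.1).1
      · have h1 := hRb (r z) (Finset.mem_image_of_mem _ hz.1) i
        have h2 := hLb i
        simp only [Pi.add_apply, Pi.zero_apply, sub_zero, nsmul_eq_mul]
        push_cast
        refine (abs_add_le _ _).trans (add_le_add h1 ?_)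
        rw [show ((k : Fin d → ℤ) * p) i = (k : ℤ) * p i from rfl, abs_mul, Nat.abs_cast]
        have : (k : ℤ) ≤ R := by exact_mod_cast Nat.lt_succ_iff.mp hz.2
        exact mul_le_mul this h2 (abs_nonneg _) (by positivity)
    · rintro ⟨z, k⟩ hz ⟨z', k'⟩ hz' h
      simp only [Finset.coe_product, Set.mem_prod, Finset.mem_coe, Finset.mem_range] at hz hz'
      simp only at h
      have hzz : z = z' := by
        rw [← (hr z hz.1).2, ← (hr z' hz'.1).2]
        rw [QuotientAddGroup.eq]
        have : -r z + r z' = k • p - k' • p := by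
          have := congrArg (fun t => t - r z - k' • p) h
          change r z + k • p - r z - k' • p = r z' + k' • p - r z - k' • p at this
          rw [show r z + k • p - r z - k' • p = k • p - k' • p by abel] at this
          rw [this]; abel
        rw [this]
        exact (lineSub v).sub_mem ((lineSub v).nsmul_mem hpm _) ((lineSub v).nsmul_mem hpm _)
      subst hzz
      have hk : k • p = k' • p := by simpa using h
      have hkk : (k : ℤ) • p = (k' : ℤ) • p := by simpa using hk
      have := smul_left_injective ℤ hp0 hkk
      simp only [Nat.cast_inj] at this
      rw [this]
  rw [Set.ncard_coe_finset, Finset.card_product, hAc, Finset.card_range] at hle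
  have := hle.trans hbig
  nlinarith

theorem ann_fibers {d : ℕ} {φ : (Fin d → ℤ) → ℤ} {v : Fin d → ℤ} (hφ : IsLinePoly φ v)
    {e : (Fin d → ℤ) → ℤ} (he : Good e) (hann : polyApply φ e = 0) :
    FinSumPeriodicFibers v e := by
  classical
  obtain ⟨P, hP, hper⟩ := periodic_of_ann hφ e he.1 hann
  have hv := hφ.2.1
  have hfin := finite_lines hv he.2 hP hper
  set A := hfin.toFinset with hA
  let q : (Fin d → ℤ) → (Fin d → ℤ) ⧸ lineSub v := fun x => x
  refine ⟨A.card, fun j x => if q x = (A.equivFin.symm j : (Fin d → ℤ) ⧸ lineSub v) then e x else 0, ?_, ?_⟩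
  · ext x
    rw [Finset.sum_apply]
    rw [Equiv.sum_comp A.equivFin.symm (fun z : A => if q x = (z : (Fin d → ℤ) ⧸ lineSub v) then e x else 0)]
    rw [Finset.sum_coe_sort A (fun z => if q x = z then e x else 0)]
    rw [Finset.sum_ite_eq]
    split_ifs with h
    · rfl
    · by_contra hne
      apply h
      rw [hA, Set.Finite.mem_toFinset]
      exact ⟨x, hne, rfl⟩
  · intro j
    obtain ⟨w, hw⟩ := QuotientAddGroup.mk_surjective (A.equivFin.symm j : (Fin d → ℤ) ⧸ lineSub v)
    refine ⟨⟨w, ?_⟩, (P : ℤ) • v, smul_ne_zero (by exact_mod_cast hP.ne') hv, ?_⟩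
    · intro x hx
      rw [← sub_mem_lineSub]
      simp only [Function.mem_support, ne_eq, ite_eq_right_iff, Classical.not_imp] at hx
      have := hx.1
      rw [← hw] at this
      have h2 := QuotientAddGroup.eq.mp this.symm
      rwa [neg_add_eq_sub] at h2
    · intro x
      have h1 : q (x + (P : ℤ) • v) = q x := by
        symm
        apply QuotientAddGroup.eq.mpr
        rw [neg_add_cancel_left]
        exact (lineSub v).zsmul_mem (self_mem_lineSub v) _
      simp only [h1, hper x]

theorem eventually_zero {d : ℕ} {ψ : (Fin d → ℤ) → ℤ} {v u : Fin d → ℤ} (hψ : IsLinePoly ψ u)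
    (hnp : NonParallel v u)
    {e : (Fin d → ℤ) → ℤ} (he : Good e) (hann : polyApply ψ e = 0) {P : ℕ} (hP : 0 < P)
    (x : Fin d → ℤ) : ∀ᶠ n : ℕ in Filter.atTop, e (x + n • ((P : ℤ) • v)) = 0 := by
  obtain ⟨Q, hQ, hper⟩ := periodic_of_ann hψ e he.1 hann
  have hfin := finite_lines hψ.2.1 he.2 hQ hper
  have hset : {n : ℕ | e (x + n • ((P : ℤ) • v)) ≠ 0}.Finite := by
    apply Set.Finite.of_finite_image (f := fun n : ℕ => ((x + n • ((P : ℤ) • v) : Fin d → ℤ) : (Fin d → ℤ) ⧸ lineSub u))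
    · apply hfin.subset
      rintro _ ⟨n, hn, rfl⟩
      exact ⟨_, hn, rfl⟩
    · intro n _ n' _ h
      obtain ⟨q, hq⟩ := QuotientAddGroup.eq.mp h
      have h2 := (LinearIndependent.pair_iff.mp hnp) (((n' : ℚ) - n) * P) (-q) (by
        rw [neg_smul, ← hq]
        ext i
        simp [intVecQ]
        ring)
      have h3 : ((n' : ℚ) - n) = 0 := by
        rcases mul_eq_zero.mp h2.1 with h | h
        · exact h
        · exfalso; have : P = 0 := by exact_mod_cast h
          omega
      have : (n' : ℚ) = n := by linarith
      exact_mod_cast this.symm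
  have := hset.eventually_cofinite_notMem
  rw [Nat.cofinite_eq_atTop] at this
  filter_upwards [this] with n hn
  simpa using hn

theorem polyApply_comm {d : ℕ} {f g : (Fin d → ℤ) → ℤ} (hf : IsPoly f) (hg : IsPoly g)
    (c : (Fin d → ℤ) → ℤ) : polyApply f (polyApply g c) = polyApply g (polyApply f c) := by
  ext x
  simp only [polyApply_eq hf, polyApply_eq hg, Finset.mul_sum]
  rw [Finset.sum_comm]
  refine Finset.sum_congr rfl fun a _ => Finset.sum_congr rfl fun b _ => ?_
  rw [sub_right_comm]; ring

end PaperFormal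

namespace PaperFormal

/-- A sparse configuration annihilated by the product `φψ` of two line
polynomials in non-parallel directions `v` and `u` splits as `c = c₁ + c₂` where `c₁` is a
finite sum of periodic `v`-fibers with `φc₁ = 0` and `c₂` is a finite sum of periodic
`u`-fibers with `ψc₂ = 0`. -/
theorem sparse_two_line_polynomial_decomposition
    {d : ℕ} (c : (Fin d → ℤ) → ℤ) (hconf : (Set.range c).Finite) (hsparse : Sparse c)
    (φ ψ : (Fin d → ℤ) → ℤ) (v u : Fin d → ℤ)
    (hφ : IsLinePoly φ v) (hψ : IsLinePoly ψ u)
    (hnp : NonParallel v u)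
    (hann : polyApply φ (polyApply ψ c) = 0) :
    ∃ c₁ c₂ : (Fin d → ℤ) → ℤ, c = c₁ + c₂ ∧
      FinSumPeriodicFibers v c₁ ∧ polyApply φ c₁ = 0 ∧
      FinSumPeriodicFibers u c₂ ∧ polyApply ψ c₂ = 0 := by
  classical
  have hgood : Good c := ⟨hconf, hsparse⟩
  have hφp := hφ.1
  have hψp := hψ.1
  obtain ⟨p, hp, hper⟩ := periodic_of_ann hφ _ (hgood.poly hψp).1 hann
  set P := (p : ℤ) • v with hP
  have hperN : ∀ (k : ℕ) x, polyApply ψ c (x + k • P) = polyApply ψ c x :=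
    fun k x => (Function.Periodic.nsmul (f := polyApply ψ c) hper k) x
  -- the difference along `P`
  have hc' : Good (fun x => c (x + P) - c x) := by
    have := (hgood.smul_shift 1 (-P)).add (hgood.smul_shift (-1) 0)
    convert this using 1
    ext x
    simp [sub_eq_add_neg]
  have hc'ann : polyApply ψ (fun x => c (x + P) - c x) = 0 := by
    ext x
    have h1 := hper x
    rw [polyApply_eq hψp, polyApply_eq hψp, ← sub_eq_zero, ← Finset.sum_sub_distrib] at h1
    rw [polyApply_eq hψp, Pi.zero_apply, ← h1]
    refine Finset.sum_congr rfl fun w _ => ?_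
    rw [sub_add_eq_add_sub]; ring
  have hlim : ∀ x, ∃ y, ∀ᶠ n : ℕ in Filter.atTop, c (x + n • P) = y := by
    intro x
    obtain ⟨N, hN⟩ := Filter.eventually_atTop.mp (eventually_zero hψ hnp hc' hc'ann hp x)
    refine ⟨c (x + N • P), Filter.eventually_atTop.mpr ⟨N, fun n hn => ?_⟩⟩
    induction n, hn using Nat.le_induction with
    | base => rfl
    | succ n hn ih =>
      have := hN n hn
      rw [← ih, succ_nsmul, ← add_assoc]
      exact sub_eq_zero.mp this
  choose c₁ hc₁ using hlim
  have hpoly : ∀ {f : (Fin d → ℤ) → ℤ}, IsPoly f → ∀ x, ∀ᶠ n : ℕ in Filter.atTop,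
      polyApply f c (x + n • P) = polyApply f c₁ x := by
    intro f hf x
    have : ∀ᶠ n : ℕ in Filter.atTop, ∀ w ∈ hf.toFinset, c (x - w + n • P) = c₁ (x - w) :=
      (Filter.eventually_all_finset _).mpr fun w _ => hc₁ _
    filter_upwards [this] with n hn
    rw [polyApply_eq hf, polyApply_eq hf]
    refine Finset.sum_congr rfl fun w hw => ?_
    rw [← hn w hw, sub_add_eq_add_sub]
  have hφc₁ : polyApply φ c₁ = 0 := by
    ext x
    have h1 := eventually_zero hψ hnp (hgood.poly hφp)
      (by rw [← polyApply_comm hφp hψp]; exact hann) hp x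
    obtain ⟨n, h2, h3⟩ := (h1.and (hpoly hφp x)).exists
    rw [← h3]; exact h2
  have hψc₁ : polyApply ψ c₁ = polyApply ψ c := by
    ext x
    obtain ⟨n, h3⟩ := (hpoly hψp x).exists
    rw [← h3, hperN]
  have hgood₁ : Good c₁ := by
    refine ⟨hconf.subset ?_, ?_⟩
    · rintro _ ⟨x, rfl⟩
      obtain ⟨n, hn⟩ := (hc₁ x).exists
      exact ⟨_, hn⟩
    · obtain ⟨a, ha, hs⟩ := hsparse
      refine ⟨a, ha, fun m hm t => ?_⟩
      have hF : (Function.support c₁ ∩ cube m t).Finite :=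
        (cube_finite m t).subset Set.inter_subset_right
      have : ∀ᶠ n : ℕ in Filter.atTop, ∀ x ∈ Function.support c₁ ∩ cube m t,
          c (x + n • P) = c₁ x := (Filter.eventually_all_finite hF).mpr fun x _ => hc₁ x
      obtain ⟨n, hn⟩ := this.exists
      refine le_trans ?_ (hs m hm (t + n • P))
      refine Set.ncard_le_ncard_of_injOn (fun x => x + n • P) ?_ ?_
        ((cube_finite _ _).subset Set.inter_subset_right)
      · intro x hx
        refine ⟨?_, fun i => ?_⟩
        · simp only [Function.mem_support, hn x hx]; exact hx.1
        · have := hx.2 i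
          simpa using this
      · intro x _ y _ h
        simpa using h
  have hgood₂ : Good (c - c₁) := by
    have := hgood.add (hgood₁.smul_shift (-1) 0)
    convert this using 1
    ext x
    simp [sub_eq_add_neg]
  have hψc₂ : polyApply ψ (c - c₁) = 0 := by
    ext x
    have h1 := congrFun hψc₁ x
    rw [polyApply_eq hψp, polyApply_eq hψp] at h1
    rw [polyApply_eq hψp]
    simp only [Pi.sub_apply, mul_sub, Finset.sum_sub_distrib, Pi.zero_apply]
    rw [h1, sub_self]
  exact ⟨c₁, c - c₁, by abel, ann_fibers hφ hgood₁ hφc₁, hφc₁, ann_fibers hψ hgood₂ hψc₂, hψc₂⟩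

end PaperFormal
end

section
/- A configuration c : ℤ^d → ℤ is periodic (has a nonzero period) if and only if c is annihilated by some line polynomial, i.e., there exist a nonzero v ∈ ℤ^d and a line polynomial f in direction v with fc = 0. -/
namespace PaperFormal

/-- The recurrence step, both directions. -/
lemma rec_zero (n : ℕ) (hn : 0 < n) (g : ℕ → ℤ) (h0 : g 0 ≠ 0) (h1 : g n ≠ 0) (b : ℤ → ℤ)
    (hb : ∀ k : ℤ, ∑ j ∈ Finset.range (n + 1), g j * b (k - j) = 0) (i : ℤ)
    (hi : ∀ t : ℕ, t < n → b (i + t) = 0) : ∀ k, b k = 0 := by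
  have key : ∀ k : ℤ, ∀ t : ℕ, t < n → b (k + t) = 0 := by
    intro k
    induction k using Int.inductionOn' (b := i) with
    | zero => exact hi
    | succ k _ ih =>
      intro t ht
      by_cases h : t + 1 < n
      · have := ih (t + 1) h
        rw [← this]; congr 1; push_cast; ring
      · have hs := hb (k + n)
        rw [Finset.sum_eq_single 0] at hs
        · have : b (k + n) = 0 := by simpa [h0] using hs
          rw [← this]; congr 1; omega
        · intro j hj hj0
          have hj' := Finset.mem_range.1 hj
          have := ih (n - j) (by omega)
          have e : k + n - (j : ℤ) = k + ((n - j : ℕ) : ℤ) := by omega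
          rw [e, this, mul_zero]
        · simp
    | pred k _ ih =>
      intro t ht
      by_cases h : 0 < t
      · have := ih (t - 1) (by omega)
        rw [← this]; congr 1; omega
      · have hs := hb (k - 1 + n)
        rw [Finset.sum_eq_single n] at hs
        · have : b (k - 1 + n - n) = 0 := by simpa [h1] using hs
          rw [← this]; congr 1; omega
        · intro j hj hj0
          have hj' := Finset.mem_range.1 hj
          have := ih (n - j - 1) (by omega)
          have e : k - 1 + n - (j : ℤ) = k + ((n - j - 1 : ℕ) : ℤ) := by omega
          rw [e, this, mul_zero]
        · simp
  intro k
  simpa using key k 0 hn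

/-- Bounded solutions of a linear recurrence have a common period. -/
lemma exists_period (A : Set ℤ) (hA : A.Finite) (n : ℕ) (hn : 0 < n) (g : ℕ → ℤ)
    (h0 : g 0 ≠ 0) (h1 : g n ≠ 0) :
    ∃ M : ℕ, 0 < M ∧ ∀ a : ℤ → ℤ, (∀ k, a k ∈ A) →
      (∀ k : ℤ, ∑ j ∈ Finset.range (n + 1), g j * a (k - j) = 0) → ∀ k, a (k + M) = a k := by
  classical
  have := hA.fintype
  refine ⟨(Fintype.card (Fin n → A)).factorial, Nat.factorial_pos _, ?_⟩
  intro a ha hr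
  obtain ⟨x, y, hxy, he⟩ := Fintype.exists_ne_map_eq_of_card_lt
    (fun (x : Fin (Fintype.card (Fin n → A) + 1)) (t : Fin n) =>
      (⟨a ((x : ℕ) + (t : ℕ)), ha _⟩ : A)) (by simp)
  wlog hlt : (x : ℕ) < y generalizing x y with H
  · refine H y x hxy.symm he.symm ?_
    have : (x : ℕ) ≠ y := fun h => hxy (Fin.ext h)
    omega
  obtain ⟨P, hP⟩ := Nat.exists_eq_add_of_lt hlt
  have hz := rec_zero n hn g h0 h1 (fun k => a (k + (P + 1 : ℕ)) - a k) (by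
    intro k
    have e1 := hr (k + (P + 1 : ℕ))
    have e2 := hr k
    simp only [mul_sub, Finset.sum_sub_distrib, e2, sub_zero]
    rw [← e1]
    refine Finset.sum_congr rfl fun j _ => ?_
    congr 2; ring) (x : ℕ) (by
    intro t ht
    have := congrFun he ⟨t, ht⟩
    simp only [Subtype.mk.injEq] at this
    rw [this, sub_eq_zero]
    congr 1
    omega)
  have hper : Function.Periodic a ((P + 1 : ℕ) : ℤ) := fun k => by
    have := hz k
    simpa [sub_eq_zero] using this
  obtain ⟨q, hq⟩ := Nat.dvd_factorial (Nat.succ_pos P) (show P + 1 ≤ Fintype.card (Fin n → A) by omega)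
  intro k
  rw [hq]
  have := hper.nat_mul q k
  rw [← this]; congr 1; push_cast; ring

/-- Parametrization of the support of a line polynomial by an arithmetic progression. -/
lemma line_param {d : ℕ} (f : (Fin d → ℤ) → ℤ) (v : Fin d → ℤ) (hf : IsLinePoly f v) :
    ∃ (p w0 : Fin d → ℤ) (n : ℕ), p ≠ 0 ∧ 0 < n ∧ f w0 ≠ 0 ∧ f (w0 + n • p) ≠ 0 ∧
      ∀ w, f w ≠ 0 → ∃ j : ℕ, j ≤ n ∧ w = w0 + j • p := by
  classical
  obtain ⟨hfin, hv, hcard, u, hu⟩ := hf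
  obtain ⟨i0, hi0⟩ : ∃ i, v i ≠ 0 := Function.ne_iff.1 hv
  obtain ⟨p, hp, hp1⟩ := Finset.extract_gcd v (s := Finset.univ) ⟨i0, Finset.mem_univ _⟩
  set G := Finset.univ.gcd v with hG
  have hp0 : p ≠ 0 := by
    rintro rfl
    exact hi0 (by simp [hp i0 (Finset.mem_univ _)])
  obtain ⟨z, hz⟩ : (Function.support f).Nonempty := by
    rw [← Set.ncard_pos hfin]; omega
  have hk : ∀ w, f w ≠ 0 → ∃ k : ℤ, w = z + k • p := by
    intro w hw
    obtain ⟨q1, h1⟩ := hu w hw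
    obtain ⟨q2, h2⟩ := hu z hz
    set q : ℚ := (q1 - q2) * G with hq
    have hqi : ∀ i, ((w i - z i : ℤ) : ℚ) = q * p i := by
      intro i
      have a1 := congrFun h1 i
      have a2 := congrFun h2 i
      simp only [intVecQ, Pi.add_apply, Pi.smul_apply, smul_eq_mul, hp i (Finset.mem_univ _)] at a1 a2
      push_cast at a1 a2 ⊢
      rw [a1, a2, hq]; ring
    have hdi : ∀ i, (q.den : ℤ) * (w i - z i) = q.num * p i := by
      intro i
      have := hqi i
      have hd : (q.den : ℚ) ≠ 0 := by exact_mod_cast q.den_nz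
      rw [← Rat.num_div_den q] at this
      field_simp at this
      rw [mul_comm]
      exact_mod_cast this
    have hdvd : (q.den : ℤ) ∣ Finset.univ.gcd p := by
      refine Finset.dvd_gcd fun i _ => ?_
      refine IsCoprime.dvd_of_dvd_mul_left ?_ (Dvd.intro _ (hdi i))
      exact (Int.isCoprime_iff_nat_coprime.2 (by simpa using q.reduced)).symm
    rw [hp1] at hdvd
    have hd1 : (q.den : ℤ) = 1 := Int.eq_one_of_dvd_one (by positivity) hdvd
    refine ⟨q.num, funext fun i => ?_⟩
    have := hdi i
    rw [hd1] at this
    simp only [Pi.add_apply, Pi.smul_apply, smul_eq_mul]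
    linarith
  have hinj : Function.Injective (fun k : ℤ => z + k • p) := by
    intro a b hab
    exact smul_left_injective ℤ hp0 (add_left_cancel hab)
  have hKfin : {k : ℤ | f (z + k • p) ≠ 0}.Finite := hfin.preimage hinj.injOn
  set K := hKfin.toFinset with hK
  have hmem : ∀ k, k ∈ K ↔ f (z + k • p) ≠ 0 := by intro k; simp [hK]
  have hKne : K.Nonempty := ⟨0, by rw [hmem]; simpa using hz⟩
  have m0 := (hmem _).1 (K.min'_mem hKne)
  have m1 := (hmem _).1 (K.max'_mem hKne)
  have hlt : K.min' hKne < K.max' hKne := by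
    obtain ⟨a, b, ha, hb, hab⟩ := (Set.one_lt_ncard_iff hfin).1 hcard
    obtain ⟨ka, rfl⟩ := hk a ha
    obtain ⟨kb, rfl⟩ := hk b hb
    exact Finset.min'_lt_max' K ((hmem _).2 ha) ((hmem _).2 hb) (fun h => hab (by rw [h]))
  have hn : ∃ n : ℕ, K.max' hKne = K.min' hKne + n := ⟨(K.max' hKne - K.min' hKne).toNat, by omega⟩
  obtain ⟨n, hn⟩ := hn
  refine ⟨p, z + K.min' hKne • p, n, hp0, by omega, m0, ?_, ?_⟩
  · rw [hn] at m1
    rwa [add_assoc, ← natCast_zsmul, ← add_smul]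
  · intro w hw
    obtain ⟨k, rfl⟩ := hk w hw
    have l1 := K.min'_le k ((hmem _).2 hw)
    have l2 := K.le_max' k ((hmem _).2 hw)
    refine ⟨(k - K.min' hKne).toNat, by omega, ?_⟩
    rw [add_assoc, ← natCast_zsmul, ← add_smul]
    congr 2; omega

/-- A configuration is periodic if and only if it is annihilated by a line
polynomial. -/
theorem periodic_iff_annihilated_by_line_polynomial
    {d : ℕ} (c : (Fin d → ℤ) → ℤ) (hconf : (Set.range c).Finite) :
    (∃ w : Fin d → ℤ, w ≠ 0 ∧ Periodic c w) ↔
    (∃ (v : Fin d → ℤ) (f : (Fin d → ℤ) → ℤ), v ≠ 0 ∧ IsLinePoly f v ∧ polyApply f c = 0) := by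
  classical
  constructor
  · rintro ⟨w, hw, hper⟩
    have hsupp : Function.support (diffPoly w) = {w, 0} := by
      ext u
      simp only [Function.mem_support, diffPoly, Set.mem_insert_iff, Set.mem_singleton_iff]
      split_ifs <;> simp_all
    refine ⟨w, diffPoly w, hw, ⟨?_, hw, ?_, 0, ?_⟩, ?_⟩
    · rw [IsPoly, hsupp]; exact Set.toFinite _
    · rw [hsupp, Set.ncard_pair hw]
    · intro x hx
      rw [hsupp] at hx
      rcases hx with rfl | rfl
      · exact ⟨1, by ext i; simp [intVecQ]⟩
      · exact ⟨0, by ext i; simp [intVecQ]⟩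
    · funext u
      have hs : (Function.support fun v => diffPoly w v * c (u - v)) ⊆
          (({w, 0} : Finset (Fin d → ℤ)) : Set (Fin d → ℤ)) := by
        refine (Function.support_mul_subset_left _ _).trans ?_
        rw [hsupp]; simp
      rw [polyApply, finsum_eq_sum_of_support_subset _ hs, Finset.sum_pair hw]
      have := hper (u - w)
      rw [sub_add_cancel] at this
      simp [diffPoly, hw.symm, this]
  · rintro ⟨v, f, hv, hf, hfc⟩
    obtain ⟨p, w0, n, hp0, hn, h0, h1, hs⟩ := line_param f v hf
    obtain ⟨M, hM, hper⟩ := exists_period (Set.range c) hconf n hn (fun j => f (w0 + j • p))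
      (by simpa using h0) h1
    refine ⟨M • p, smul_ne_zero hM.ne' hp0, fun u => ?_⟩
    have := hper (fun k => c (u + k • p)) (fun k => Set.mem_range_self _) (by
      intro k
      have hk := congrFun hfc (u + w0 + k • p)
      have hss : (Function.support fun x => f x * c (u + w0 + k • p - x)) ⊆
          (((Finset.range (n + 1)).image fun j : ℕ => w0 + j • p : Finset (Fin d → ℤ)) :
            Set (Fin d → ℤ)) := by
        refine (Function.support_mul_subset_left _ _).trans ?_
        intro x hx
        obtain ⟨j, hj, rfl⟩ := hs x hx
        exact Finset.mem_coe.2 (Finset.mem_image_of_mem _ (Finset.mem_range.2 (by omega)))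
      rw [polyApply, finsum_eq_sum_of_support_subset _ hss, Finset.sum_image] at hk
      · rw [Pi.zero_apply] at hk
        rw [← hk]
        refine Finset.sum_congr rfl fun j _ => ?_
        congr 2
        rw [sub_smul, natCast_zsmul]; abel
      · intro a _ b _ hab
        have hab' : w0 + a • p = w0 + b • p := hab
        have h2 := add_left_cancel hab'
        rw [← natCast_zsmul, ← natCast_zsmul] at h2
        exact_mod_cast smul_left_injective ℤ hp0 h2) 0
    simpa using this

end PaperFormal
end
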